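/- Comparison principle in ℂⁿ: let Ω be a bounded domain in ℂⁿ and let u, v be real-valued functions of class C² on cl(Ω). Assume the complex Hessian matrix H_ℂu(z) := (∂²u/∂z_p∂z̄_q(z))_{p,q=1,…,n} is positive semidefinite for every z ∈ Ω, that det H_ℂu(z) ≥ det H_ℂv(z) at every z ∈ Ω where H_ℂv(z) is positive definite, and that u ≤ v on ∂Ω. Then u ≤ v on cl(Ω). -/

import Mathlib

open Complex Set
open scoped Topology ComplexOrder

noncomputable section

variable {n : ℕ}

/-- The tangent direction in `ℂⁿ` with `c` in the `p`-th coordinate: e.g. `cDir p 1` is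
`∂/∂x_p` and `cDir p I` is `∂/∂y_p`. -/
def cDir (p : Fin n) (c : ℂ) : Fin n → ℂ := Pi.single p c

/-- Second directional derivative of `w` at `z`, in the directions `a` and `b`. -/
def secondDeriv (w : (Fin n → ℂ) → ℝ) (z a b : Fin n → ℂ) : ℝ :=
  fderiv ℝ (fun y => fderiv ℝ w y a) z b

/-- The complex Hessian matrix of a `C²` function `w : ℂⁿ → ℝ`:
`(H_ℂ w)_{p,q} = ∂²w/∂z_p∂z̄_q
  = (1/4)(∂²w/∂x_p∂x_q + ∂²w/∂y_p∂y_q + i(∂²w/∂x_p∂y_q - ∂²w/∂y_p∂x_q))`. -/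
def complexHessian (w : (Fin n → ℂ) → ℝ) (z : Fin n → ℂ) : Matrix (Fin n) (Fin n) ℂ :=
  Matrix.of fun p q =>
    ((secondDeriv w z (cDir p 1) (cDir q 1)
        + secondDeriv w z (cDir p Complex.I) (cDir q Complex.I) : ℝ) : ℂ) / 4
    + Complex.I * ((secondDeriv w z (cDir p 1) (cDir q Complex.I)
        - secondDeriv w z (cDir p Complex.I) (cDir q 1) : ℝ) : ℂ) / 4

/-!
If `u > v` somewhere in `cl Ω`, then for small `ε > 0` the function `u - v + ε|z|²` has a local
maximum inside `Ω`, and its complex Hessian `H_ℂu - H_ℂv + ε` is negative semidefinite there.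
Hence `H_ℂv ≥ H_ℂu + ε`, so that `H_ℂv` is positive definite and, since the determinant is strictly
monotone on positive semidefinite matrices, `det H_ℂv > det H_ℂu`: a contradiction.
-/

section Determinant

variable {ι 𝕜 : Type*} [Fintype ι] [DecidableEq ι] [RCLike 𝕜] {A P : Matrix ι ι 𝕜}

theorem det_add_one_eq_prod_eigenvalues_add_one (hA : A.IsHermitian) :
    (A + 1).det = ∏ i, ((hA.eigenvalues i : 𝕜) + 1) := by
  have hdiag : A + 1 = Unitary.conjStarAlgAut 𝕜 _ hA.eigenvectorUnitary
      (Matrix.diagonal fun i => (hA.eigenvalues i : 𝕜) + 1) := by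
    conv_lhs => rw [hA.spectral_theorem, ← map_one (Unitary.conjStarAlgAut 𝕜 _ _), ← map_add,
      ← Matrix.diagonal_one, Matrix.diagonal_add]
    rfl
  rw [hdiag, Unitary.conjStarAlgAut_apply, Matrix.det_mul_comm, ← mul_assoc,
    Unitary.coe_star_mul_self, one_mul, Matrix.det_diagonal]

theorem det_lt_det_add_one_of_posSemidef [Nonempty ι] (hA : A.PosSemidef) :
    A.det < (A + 1).det := by
  rw [hA.1.det_eq_prod_eigenvalues, det_add_one_eq_prod_eigenvalues_add_one hA.1]
  norm_cast
  have h_nonneg := hA.eigenvalues_nonneg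
  by_cases hpos : ∀ i, 0 < hA.1.eigenvalues i
  · exact Finset.prod_lt_prod_of_nonempty (fun i _ => hpos i) (fun i _ => lt_add_one _)
      Finset.univ_nonempty
  · obtain ⟨i, hi⟩ := not_forall.1 hpos
    rw [Finset.prod_eq_zero (Finset.mem_univ i) ((h_nonneg i).antisymm' (not_lt.1 hi))]
    exact Finset.prod_pos fun j _ => add_pos_of_nonneg_of_pos (h_nonneg j) one_pos

open scoped MatrixOrder Matrix in
theorem det_lt_det_add_of_posSemidef_of_posDef [Nonempty ι] (hA : A.PosSemidef) (hP : P.PosDef) :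
    A.det < (A + P).det := by
  obtain ⟨B, rfl⟩ := CStarAlgebra.nonneg_iff_eq_star_mul_self.mp hA.nonneg
  have hPu : IsUnit P.det := (Matrix.isUnit_iff_isUnit_det P).1 hP.isUnit
  -- Factoring out `P` and commuting `B` past `P⁻¹ * Bᴴ` turns `P` into the identity.
  have hdet : (star B * B).det = P.det * (B * P⁻¹ * Bᴴ).det := by
    rw [mul_assoc, Matrix.det_mul_comm B, ← Matrix.det_mul, ← mul_assoc, ← mul_assoc,
      Matrix.mul_nonsing_inv P hPu, one_mul, Matrix.star_eq_conjTranspose]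
  have hdet_add : (star B * B + P).det = P.det * (B * P⁻¹ * Bᴴ + 1).det := by
    rw [mul_assoc, add_comm _ (1 : Matrix ι ι 𝕜), Matrix.det_one_add_mul_comm, ← Matrix.det_mul,
      mul_add, mul_one, ← mul_assoc, ← mul_assoc, Matrix.mul_nonsing_inv P hPu, one_mul, add_comm,
      Matrix.star_eq_conjTranspose]
  rw [hdet, hdet_add]
  exact mul_lt_mul_of_pos_left (det_lt_det_add_one_of_posSemidef
    (hP.inv.posSemidef.mul_mul_conjTranspose_same B)) hP.det_pos

end Determinant

section LocalMax

theorem deriv_deriv_nonpos_of_isLocalMax {g : ℝ → ℝ} {x : ℝ} (hmax : IsLocalMax g x)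
    (hg : ContinuousAt g x) : deriv (deriv g) x ≤ 0 := by
  by_contra! hpos
  have hmin : IsLocalMin g x := isLocalMin_of_deriv_deriv_pos hpos hmax.deriv_eq_zero hg
  have hconst : g =ᶠ[𝓝 x] fun _ => g x := by
    filter_upwards [hmax, hmin] with t hle hge using le_antisymm hle hge
  have hzero : deriv (deriv g) x = 0 := by simp [hconst.deriv.deriv_eq]
  exact hpos.ne' hzero

theorem fderiv_fderiv_apply_nonpos_of_isLocalMax {E : Type*} [NormedAddCommGroup E]
    [NormedSpace ℝ E] {f : E → ℝ} {z : E} (hmax : IsLocalMax f z) (hf : ContDiffAt ℝ 2 f z)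
    (ξ : E) : fderiv ℝ (fun y => fderiv ℝ f y ξ) z ξ ≤ 0 := by
  have hz : z + (0 : ℝ) • ξ = z := by simp
  have hline : ContinuousAt (fun t : ℝ => z + t • ξ) 0 := by fun_prop
  have htendsto : Filter.Tendsto (fun t : ℝ => z + t • ξ) (𝓝 0) (𝓝 z) := by
    simpa only [hz] using hline.tendsto
  have hderiv : deriv (fun t : ℝ => f (z + t • ξ)) =ᶠ[𝓝 0] fun t => fderiv ℝ f (z + t • ξ) ξ := by
    filter_upwards [htendsto.eventually (hf.eventually (by simp))] with t ht
    exact (ht.differentiableAt two_ne_zero).deriv_comp_add_smul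
  have hdiff : DifferentiableAt ℝ (fun y => fderiv ℝ f y ξ) z :=
    ((hf.fderiv_right (m := 1) le_rfl).differentiableAt one_ne_zero).clm_apply
      (differentiableAt_const ξ)
  have hmax_line : IsLocalMax (fun t : ℝ => f (z + t • ξ)) 0 := by
    simpa only [IsLocalMax, IsMaxFilter, hz] using htendsto.eventually hmax
  have hcont : ContinuousAt (fun t : ℝ => f (z + t • ξ)) 0 :=
    ContinuousAt.comp (g := f) (by simpa only [hz] using hf.continuousAt) hline
  have hsecond : deriv (deriv fun t : ℝ => f (z + t • ξ)) 0
      = fderiv ℝ (fun y => fderiv ℝ f y ξ) z ξ := by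
    rw [hderiv.deriv_eq, DifferentiableAt.deriv_comp_add_smul (f := fun y => fderiv ℝ f y ξ)
      (t := (0 : ℝ)) (by rwa [hz])]
    exact congrArg (fun y => fderiv ℝ (fun y => fderiv ℝ f y ξ) y ξ) hz
  exact hsecond ▸ deriv_deriv_nonpos_of_isLocalMax hmax_line hcont

theorem exists_isLocalMax_add_smul_of_le_of_lt {X : Type*} [TopologicalSpace X] {s t : Set X}
    {f ρ : X → ℝ} {c : ℝ} {z : X} (ht : IsCompact t) (hs : IsOpen s) (hst : s ⊆ t)
    (hf : ContinuousOn f t) (hρ : ContinuousOn ρ t) (hfc : ∀ x ∈ t \ s, f x ≤ c)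
    (hz : z ∈ t) (hcz : c < f z) : ∃ ε : ℝ, 0 < ε ∧
      ∃ x ∈ s, IsLocalMax (f + ε • ρ) x := by
  obtain ⟨M, hM⟩ := ht.exists_bound_of_continuousOn hρ
  obtain ⟨ε, hε, hεM⟩ := exists_pos_mul_lt (sub_pos.2 hcz) (2 * M)
  refine ⟨ε, hε, ht.exists_isLocalMax_mem_open hst (hf.add (hρ.const_smul ε)) hz
    (fun x hx => ?_) hs⟩
  have hρx : ε * ρ x ≤ ε * M := mul_le_mul_of_nonneg_left (abs_le.1 (hM x hx.1)).2 hε.le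
  have hρz : ε * -M ≤ ε * ρ z := mul_le_mul_of_nonneg_left (abs_le.1 (hM z hz)).1 hε.le
  simp only [Pi.add_apply, Pi.smul_apply, smul_eq_mul]
  linarith [hfc x hx]

end LocalMax

section ComplexHessian

variable {u v w : (Fin n → ℂ) → ℝ} {z : Fin n → ℂ}

theorem secondDeriv_eq_fderiv_fderiv (hw : ContDiffAt ℝ 2 w z) (a b : Fin n → ℂ) :
    secondDeriv w z a b = fderiv ℝ (fderiv ℝ w) z b a := by
  have hdiff : DifferentiableAt ℝ (fderiv ℝ w) z :=
    (hw.fderiv_right (m := 1) le_rfl).differentiableAt one_ne_zero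
  simp [secondDeriv, fderiv_clm_apply hdiff (differentiableAt_const a)]

theorem secondDeriv_eq_iteratedFDeriv (hw : ContDiffAt ℝ 2 w z) (a b : Fin n → ℂ) :
    secondDeriv w z a b = iteratedFDeriv ℝ 2 w z ![b, a] := by
  simp [secondDeriv_eq_fderiv_fderiv hw, iteratedFDeriv_two_apply]

theorem secondDeriv_comm (hw : ContDiffAt ℝ 2 w z) (a b : Fin n → ℂ) :
    secondDeriv w z a b = secondDeriv w z b a := by
  rw [secondDeriv_eq_fderiv_fderiv hw, secondDeriv_eq_fderiv_fderiv hw]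
  exact hw.isSymmSndFDerivAt (by simp) b a

theorem re_complexHessian_apply (w : (Fin n → ℂ) → ℝ) (z : Fin n → ℂ) (p q : Fin n) :
    (complexHessian w z p q).re
      = (secondDeriv w z (cDir p 1) (cDir q 1) + secondDeriv w z (cDir p I) (cDir q I)) / 4 := by
  simp [complexHessian]

theorem im_complexHessian_apply (w : (Fin n → ℂ) → ℝ) (z : Fin n → ℂ) (p q : Fin n) :
    (complexHessian w z p q).im
      = (secondDeriv w z (cDir p 1) (cDir q I) - secondDeriv w z (cDir p I) (cDir q 1)) / 4 := by
  simp [complexHessian]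

theorem complexHessian_add (hu : ContDiffAt ℝ 2 u z) (hv : ContDiffAt ℝ 2 v z) :
    complexHessian (u + v) z = complexHessian u z + complexHessian v z := by
  have huv : ContDiffAt ℝ 2 (u + v) z := hu.add hv
  ext p q
  simp only [complexHessian, Matrix.of_apply, Matrix.add_apply, secondDeriv_eq_iteratedFDeriv hu,
    secondDeriv_eq_iteratedFDeriv hv, secondDeriv_eq_iteratedFDeriv huv,
    iteratedFDeriv_add_apply hu hv, _root_.add_apply]
  push_cast
  ring

theorem complexHessian_const_smul (hw : ContDiffAt ℝ 2 w z) (c : ℝ) :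
    complexHessian (c • w) z = c • complexHessian w z := by
  have hcw : ContDiffAt ℝ 2 (c • w) z := hw.const_smul c
  ext p q
  simp only [complexHessian, Matrix.of_apply, Matrix.smul_apply, secondDeriv_eq_iteratedFDeriv hw,
    secondDeriv_eq_iteratedFDeriv hcw, iteratedFDeriv_const_smul_apply hw, _root_.smul_apply,
    smul_eq_mul, Complex.real_smul]
  push_cast
  ring

theorem complexHessian_sub (hu : ContDiffAt ℝ 2 u z) (hv : ContDiffAt ℝ 2 v z) :
    complexHessian (u - v) z = complexHessian u z - complexHessian v z := by
  have hneg : ContDiffAt ℝ 2 ((-1 : ℝ) • v) z := hv.const_smul (-1 : ℝ)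
  rw [sub_eq_add_neg, ← neg_one_smul ℝ v, complexHessian_add hu hneg,
    complexHessian_const_smul hv, neg_one_smul, sub_eq_add_neg]

theorem isHermitian_complexHessian (hw : ContDiffAt ℝ 2 w z) :
    (complexHessian w z).IsHermitian := by
  ext p q
  apply Complex.ext <;>
    simp only [Matrix.conjTranspose_apply, RCLike.star_def, Complex.conj_re, Complex.conj_im,
      re_complexHessian_apply, im_complexHessian_apply, secondDeriv_comm hw (cDir q _) (cDir p _)]
  ring

theorem eq_sum_cDir (ξ : Fin n → ℂ) :
    ξ = ∑ p, ((ξ p).re • cDir p 1 + (ξ p).im • cDir p I) := by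
  ext q
  simp [cDir, Finset.sum_apply, Pi.single_apply, Finset.sum_add_distrib, Complex.re_add_im]

theorem secondDeriv_self_eq_sum (hw : ContDiffAt ℝ 2 w z) (ξ : Fin n → ℂ) :
    secondDeriv w z ξ ξ = ∑ p, ∑ q,
      ((ξ p).re * (ξ q).re * secondDeriv w z (cDir p 1) (cDir q 1)
        + (ξ p).re * (ξ q).im * secondDeriv w z (cDir p 1) (cDir q I)
        + (ξ p).im * (ξ q).re * secondDeriv w z (cDir p I) (cDir q 1)
        + (ξ p).im * (ξ q).im * secondDeriv w z (cDir p I) (cDir q I)) := by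
  simp only [secondDeriv_eq_fderiv_fderiv hw]
  conv_lhs => rw [eq_sum_cDir ξ]
  simp only [map_sum, map_add, map_smul, _root_.sum_apply, _root_.add_apply, _root_.smul_apply,
    smul_eq_mul, Finset.mul_sum, ← Finset.sum_add_distrib]
  exact Finset.sum_congr rfl fun p _ => Finset.sum_congr rfl fun q _ => by ring

-- The Levi form `∑ ∂²w/∂z_p∂z̄_q ξ_p ξ̄_q` conjugates the second factor, while `xᴴ H x` conjugates
-- the first one: hence `ξ = star x`.
theorem re_star_dotProduct_complexHessian_mulVec (hw : ContDiffAt ℝ 2 w z) (x : Fin n → ℂ) :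
    (star x ⬝ᵥ (complexHessian w z).mulVec x).re =
      (secondDeriv w z (star x) (star x) + secondDeriv w z (I • star x) (I • star x)) / 4 := by
  rw [secondDeriv_self_eq_sum hw, secondDeriv_self_eq_sum hw, ← Finset.sum_add_distrib,
    Finset.sum_div]
  simp only [← Finset.sum_add_distrib, Finset.sum_div, dotProduct, Matrix.mulVec, Finset.mul_sum,
    Complex.re_sum]
  refine Finset.sum_congr rfl fun p _ => Finset.sum_congr rfl fun q _ => ?_
  simp only [Pi.star_apply, RCLike.star_def, Pi.smul_apply, smul_eq_mul, Complex.mul_re,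
    Complex.mul_im, Complex.conj_re, Complex.conj_im, Complex.I_re, Complex.I_im,
    re_complexHessian_apply, im_complexHessian_apply]
  ring

theorem posSemidef_neg_complexHessian_of_isLocalMax (hmax : IsLocalMax w z)
    (hw : ContDiffAt ℝ 2 w z) : (-complexHessian w z).PosSemidef := by
  have hherm : (-complexHessian w z).IsHermitian := (isHermitian_complexHessian hw).neg
  refine .of_dotProduct_mulVec_nonneg hherm fun x => Complex.nonneg_iff.2
    ⟨?_, (hherm.im_star_dotProduct_mulVec_self x).symm⟩
  have hreal : secondDeriv w z (star x) (star x) ≤ 0 :=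
    fderiv_fderiv_apply_nonpos_of_isLocalMax hmax hw _
  have himag : secondDeriv w z (I • star x) (I • star x) ≤ 0 :=
    fderiv_fderiv_apply_nonpos_of_isLocalMax hmax hw _
  rw [Matrix.neg_mulVec, dotProduct_neg, Complex.neg_re,
    re_star_dotProduct_complexHessian_mulVec hw]
  linarith

end ComplexHessian

/-- The function `|z|²` on `ℂⁿ`, the model strictly plurisubharmonic function. It is spelled out as
a sum because `Fin n → ℂ` carries the sup norm. -/
def sumNormSq (z : Fin n → ℂ) : ℝ := ∑ p, ‖z p‖ ^ 2

theorem contDiff_sumNormSq {k : WithTop ℕ∞} : ContDiff ℝ k (sumNormSq (n := n)) :=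
  ContDiff.sum fun p _ => (contDiff_apply ℝ ℂ p).norm_sq ℝ

theorem fderiv_sumNormSq_apply (z a : Fin n → ℂ) :
    fderiv ℝ sumNormSq z a = 2 * ∑ p, inner ℝ (z p) (a p) := by
  have hsum : HasFDerivAt sumNormSq
      (∑ p, 2 • (innerSL ℝ (z p)).comp (ContinuousLinearMap.proj p)) z :=
    HasFDerivAt.fun_sum fun p _ => (hasFDerivAt_apply p z).norm_sq
  rw [hsum.fderiv, Finset.mul_sum, _root_.sum_apply]
  exact Finset.sum_congr rfl fun p _ => (two_nsmul _).trans (two_mul _).symm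

theorem secondDeriv_sumNormSq (z a b : Fin n → ℂ) :
    secondDeriv sumNormSq z a b = 2 * ∑ p, inner ℝ (b p) (a p) := by
  have hlin : HasFDerivAt (fun y : Fin n → ℂ => 2 * ∑ p, inner ℝ (a p) (y p))
      ((2 : ℝ) • ∑ p, (innerSL ℝ (a p)).comp (ContinuousLinearMap.proj p)) z :=
    (HasFDerivAt.fun_sum fun p _ =>
      ((innerSL ℝ (a p)).hasFDerivAt.comp z (hasFDerivAt_apply p z))).const_mul 2
  simp only [secondDeriv, fderiv_sumNormSq_apply, real_inner_comm (a _)]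
  rw [hlin.fderiv, _root_.smul_apply, _root_.sum_apply]
  rfl

theorem secondDeriv_sumNormSq_cDir (z : Fin n → ℂ) (p q : Fin n) (c d : ℂ) :
    secondDeriv sumNormSq z (cDir p c) (cDir q d) = if p = q then 2 * inner ℝ d c else 0 := by
  rw [secondDeriv_sumNormSq, Finset.sum_eq_single q
    (fun r _ hr => by rw [cDir, Pi.single_eq_of_ne hr, inner_zero_left]) (by simp)]
  rcases eq_or_ne p q with rfl | hpq
  · simp only [cDir, Pi.single_eq_same, if_true]
  · rw [if_neg hpq, cDir, cDir, Pi.single_eq_of_ne hpq.symm, inner_zero_right, mul_zero]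

theorem complexHessian_sumNormSq (z : Fin n → ℂ) : complexHessian sumNormSq z = 1 := by
  ext p q
  simp only [complexHessian, Matrix.of_apply, secondDeriv_sumNormSq_cDir, Matrix.one_apply]
  split_ifs <;> norm_num

theorem posDef_complexHessian_sub_of_isLocalMax {u v : (Fin n → ℂ) → ℝ} {z : Fin n → ℂ} {ε : ℝ}
    (hε : 0 < ε) (hu : ContDiffAt ℝ 2 u z) (hv : ContDiffAt ℝ 2 v z)
    (hmax : IsLocalMax (u - v + ε • sumNormSq) z) :
    (complexHessian v z - complexHessian u z).PosDef := by
  have hρ : ContDiffAt ℝ 2 sumNormSq z := contDiff_sumNormSq.contDiffAt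
  have hερ : ContDiffAt ℝ 2 (ε • sumNormSq) z := hρ.const_smul ε
  have huv : ContDiffAt ℝ 2 (u - v) z := hu.sub hv
  have hneg := posSemidef_neg_complexHessian_of_isLocalMax hmax (huv.add hερ)
  rw [complexHessian_add huv hερ, complexHessian_sub hu hv,
    complexHessian_const_smul hρ, complexHessian_sumNormSq] at hneg
  have hε_one : (ε • (1 : Matrix (Fin n) (Fin n) ℂ)).PosDef := Matrix.PosDef.one.smul hε
  convert hε_one.add_posSemidef hneg using 1
  abel

theorem comparison_principle_Cn_general (hn : 0 < n) {Ω : Set (Fin n → ℂ)} (hΩo : IsOpen Ω)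
    (hΩbdd : Bornology.IsBounded Ω) {u v : (Fin n → ℂ) → ℝ}
    (huc : ContinuousOn u (closure Ω)) (hvc : ContinuousOn v (closure Ω))
    (hu : ContDiffOn ℝ 2 u Ω) (hv : ContDiffOn ℝ 2 v Ω)
    (hupsd : ∀ z ∈ Ω, (complexHessian u z).PosSemidef)
    (hdet : ∀ z ∈ Ω, (complexHessian v z).PosDef →
      ((complexHessian v z).det).re ≤ ((complexHessian u z).det).re)
    (hbdry : ∀ z ∈ frontier Ω, u z ≤ v z) :
    ∀ z ∈ closure Ω, u z ≤ v z := by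
  by_contra! ⟨z₁, hz₁, hlt⟩
  have : Nonempty (Fin n) := Fin.pos_iff_nonempty.1 hn
  obtain ⟨ε, hε, z, hz, hmax⟩ := exists_isLocalMax_add_smul_of_le_of_lt hΩbdd.isCompact_closure hΩo
    subset_closure (huc.sub hvc) (contDiff_sumNormSq (k := 0)).continuous.continuousOn
    (fun x hx => sub_nonpos.2 (hbdry x (hΩo.frontier_eq ▸ hx))) hz₁ (sub_pos.2 hlt)
  have hΩz : Ω ∈ 𝓝 z := hΩo.mem_nhds hz
  have hgap : (complexHessian v z - complexHessian u z).PosDef :=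
    posDef_complexHessian_sub_of_isLocalMax hε (hu.contDiffAt hΩz) (hv.contDiffAt hΩz) hmax
  have hvpos : (complexHessian v z).PosDef := by
    simpa using hgap.posSemidef_add (hupsd z hz)
  have hdet_lt : (complexHessian u z).det < (complexHessian v z).det := by
    simpa using det_lt_det_add_of_posSemidef_of_posDef (hupsd z hz) hgap
  exact (Complex.lt_def.1 hdet_lt).1.not_ge (hdet z hz hvpos)

/-- **Comparison principle in `ℂⁿ`** (the case `J = J_st` of Proposition 2.1, with
`ρ(z) = |z|²` as the bounded strictly plurisubharmonic function): if `u, v ∈ C²(cl Ω)` on a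
bounded domain `Ω ⊆ ℂⁿ`, the complex Hessian of `u` is positive semidefinite on `Ω`,
`det H_ℂu ≥ det H_ℂv` wherever `H_ℂv` is positive definite, and `u ≤ v` on `∂Ω`, then
`u ≤ v` on `cl Ω`. -/
theorem comparison_principle_Cn (hn : 0 < n)
    (Ω : Set (Fin n → ℂ)) (hΩo : IsOpen Ω) (hΩconn : IsConnected Ω)
    (hΩbdd : Bornology.IsBounded Ω)
    (u v : (Fin n → ℂ) → ℝ)
    (hu : ContDiffOn ℝ 2 u (closure Ω)) (hv : ContDiffOn ℝ 2 v (closure Ω))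
    (hupsd : ∀ z ∈ Ω, (complexHessian u z).PosSemidef)
    (hdet : ∀ z ∈ Ω, (complexHessian v z).PosDef →
      ((complexHessian v z).det).re ≤ ((complexHessian u z).det).re)
    (hbdry : ∀ z ∈ frontier Ω, u z ≤ v z) :
    ∀ z ∈ closure Ω, u z ≤ v z := by
  exact comparison_principle_Cn_general hn hΩo hΩbdd hu.continuousOn hv.continuousOn
    (hu.mono subset_closure) (hv.mono subset_closure) hupsd hdet hbdry

end
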